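/- Let D_θ (θ ∈ Θ) be density matrices on M_n(ℂ) admitting a decomposition D_θ = L_θ R where L_θ, R are positive matrices, R is invertible, and R commutes with every L_θ. If M_L denotes the *-subalgebra generated by {L_θ : θ ∈ Θ}, then D_θ^{it} D_ω^{-it} ∈ M_L for every θ and t, where D_ω = Σ_n λ_n D_{θ_n} is any faithful convex combination (λ_n > 0) of the D_θ; in particular M_L is invariant under the modular group of ω and is a sufficient subalgebra. -/

import Mathlib

open ComplexOrder Matrix

/-- Imaginary power `D^{it}` of a Hermitian matrix, via spectral decomposition
(vanishing on the kernel). -/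
noncomputable def Matrix.IsHermitian.impow {n : ℕ} {D : Matrix (Fin n) (Fin n) ℂ}
    (hD : D.IsHermitian) (t : ℝ) : Matrix (Fin n) (Fin n) ℂ :=
  (hD.eigenvectorUnitary : Matrix (Fin n) (Fin n) ℂ) *
    Matrix.diagonal (fun i => if hD.eigenvalues i = 0 then 0 else
      Complex.exp (Complex.I * t * Real.log (hD.eigenvalues i))) *
    star (hD.eigenvectorUnitary : Matrix (Fin n) (Fin n) ℂ)

/-! On a joint eigenvector of two commuting Hermitian matrices every power is a scalar, so
`(LR)^{it} = L^{it} R^{it}`. A series of the `D_θ = L_θ R` lies in the finite-dimensional, hence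
closed, space `M_L R`, so `D_ω = K R` with `K ∈ M_L`. As `R` commutes with `M_L`, the powers of
`R` cancel in `D_θ^{it} x D_ω^{-it} = L_θ^{it} x K^{-it}` for `x ∈ M_L`, and `L_θ^{it}` and
`K^{-it}` are polynomials in `L_θ` and `K`. -/

open Polynomial

/-- The imaginary power `x^{it}` of a real number, with value `0` at `x = 0`, so that it matches
`Matrix.IsHermitian.impow` on the spectrum. For `x < 0` it is `|x|^{it}`, because
`Real.log x = Real.log |x|`. -/
noncomputable def imaginaryPow (t x : ℝ) : ℂ :=
  if x = 0 then 0 else Complex.exp (Complex.I * t * Real.log x)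

lemma imaginaryPow_mul (t x y : ℝ) :
    imaginaryPow t (x * y) = imaginaryPow t x * imaginaryPow t y := by
  by_cases hx : x = 0
  · simp [imaginaryPow, hx]
  by_cases hy : y = 0
  · simp [imaginaryPow, hy]
  simp only [imaginaryPow, hx, hy, mul_eq_zero, or_self, if_false, Real.log_mul hx hy,
    ← Complex.exp_add]
  push_cast
  ring_nf

lemma imaginaryPow_mul_imaginaryPow_neg (t : ℝ) {x : ℝ} (hx : x ≠ 0) :
    imaginaryPow t x * imaginaryPow (-t) x = 1 := by
  simp [imaginaryPow, hx, ← Complex.exp_add]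

section StarAlgebra

lemma commute_of_mem_starAlgebra_adjoin {𝕜 A : Type*} [CommSemiring 𝕜] [StarRing 𝕜] [Semiring A]
    [StarRing A] [Algebra 𝕜 A] [StarModule 𝕜 A] {r x : A} {s : Set A} (hr : IsSelfAdjoint r)
    (hs : ∀ a ∈ s, Commute r a) (hx : x ∈ StarAlgebra.adjoin 𝕜 s) : Commute r x := by
  have hle : StarAlgebra.adjoin 𝕜 s ≤ StarSubalgebra.centralizer 𝕜 {r} := by
    refine StarAlgebra.adjoin_le fun a ha ↦ (StarSubalgebra.mem_centralizer_iff 𝕜).mpr ?_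
    rintro _ rfl
    exact ⟨(hs a ha).eq, hr.star_eq.symm ▸ (hs a ha).eq⟩
  exact ((StarSubalgebra.mem_centralizer_iff 𝕜).mp (hle hx) r rfl).1

lemma isSelfAdjoint_of_mul_of_commute {A : Type*} [Monoid A] [StarMul A] {a r : A}
    (har : IsSelfAdjoint (a * r)) (hr : IsSelfAdjoint r) (hunit : IsUnit r) (hcomm : Commute r a) :
    IsSelfAdjoint a := by
  refine hunit.mul_left_cancel ?_
  calc r * star a = star (a * r) := by rw [star_mul, hr.star_eq]
    _ = r * a := by rw [har.star_eq, hcomm.eq]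

end StarAlgebra

section Eigenvectors

variable {ι : Type*} [Fintype ι]

lemma aeval_mulVec_of_mulVec_eq_smul [DecidableEq ι] {K : Type*} [CommRing K]
    {A : Matrix ι ι K} {v : ι → K}
    {μ : K} (hv : A *ᵥ v = μ • v) (p : K[X]) : aeval A p *ᵥ v = p.eval μ • v := by
  induction p using Polynomial.induction_on' with
  | add p q hp hq => simp only [map_add, eval_add, add_mulVec, add_smul, hp, hq]
  | monomial k a =>
    have hpow : A ^ k *ᵥ v = μ ^ k • v := by
      induction k with
      | zero => simp
      | succ k ih => rw [pow_succ, ← mulVec_mulVec, hv, mulVec_smul, ih, smul_smul, pow_succ']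
    rw [aeval_monomial, eval_monomial, ← Algebra.smul_def, smul_mulVec, hpow, smul_smul]

lemma exists_eigenvalues_eq [DecidableEq ι] {𝕜 : Type*} [RCLike 𝕜] {A : Matrix ι ι 𝕜}
    (hA : A.IsHermitian) {v : ι → 𝕜} {μ : 𝕜} (hv0 : v ≠ 0) (hv : A *ᵥ v = μ • v) :
    ∃ i, (hA.eigenvalues i : 𝕜) = μ := by
  have hμ : Module.End.HasEigenvalue (toLin' A) μ :=
    Module.End.hasEigenvalue_of_hasEigenvector
      ⟨Module.End.mem_eigenspace_iff.mpr (by rwa [toLin'_apply]), hv0⟩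
  have hspec := hμ.mem_spectrum
  rw [spectrum_toLin', hA.spectrum_eq_image_range] at hspec
  simpa using hspec

lemma eq_of_mulVec_eq_of_joint_eigenvectors {𝕜 : Type*} [RCLike 𝕜] {A B M N : Matrix ι ι 𝕜}
    (hA : A.IsHermitian) (hB : B.IsHermitian) (hAB : Commute A B)
    (hMN : ∀ (x y : ℝ) (v : ι → 𝕜), v ≠ 0 → A *ᵥ v = (x : 𝕜) • v → B *ᵥ v = (y : 𝕜) • v →
      M *ᵥ v = N *ᵥ v) :
    M = N := by
  classical
  have htop := (isSymmetric_toEuclideanLin_iff.mpr hA)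
    |>.iSup_iSup_eigenspace_inf_eigenspace_eq_top_of_commute (isSymmetric_toEuclideanLin_iff.mpr hB)
    (show Commute (toEuclideanLin A) (toEuclideanLin B) from LinearMap.ext fun v ↦ by
      simp [Module.End.mul_apply, toLpLin_apply, mulVec_mulVec, hAB.eq])
  have hle : ⊤ ≤ LinearMap.eqLocus (toEuclideanLin M) (toEuclideanLin N) := by
    rw [← htop]
    refine iSup_le fun α ↦ iSup_le fun β ↦ ?_
    rintro v ⟨hα, hβ⟩
    have hAv : A *ᵥ v.ofLp = α • v.ofLp :=
      congrArg WithLp.ofLp (Module.End.mem_eigenspace_iff.mp hα)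
    have hBv : B *ᵥ v.ofLp = β • v.ofLp :=
      congrArg WithLp.ofLp (Module.End.mem_eigenspace_iff.mp hβ)
    by_cases hv : v.ofLp = 0
    · simp [LinearMap.mem_eqLocus, toLpLin_apply, hv]
    obtain ⟨i, rfl⟩ := exists_eigenvalues_eq hA hv hAv
    obtain ⟨j, rfl⟩ := exists_eigenvalues_eq hB hv hBv
    exact congrArg (WithLp.toLp 2) (hMN _ _ _ hv hAv hBv)
  exact toEuclideanLin.injective (LinearMap.ext fun v ↦ hle Submodule.mem_top)

end Eigenvectors

section Impow

variable {n : ℕ} {A B : Matrix (Fin n) (Fin n) ℂ}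

lemma aeval_eq_conj_diagonal_eval (hA : A.IsHermitian) (p : ℂ[X]) :
    aeval A p = (hA.eigenvectorUnitary : Matrix (Fin n) (Fin n) ℂ) *
      diagonal (fun i ↦ p.eval (hA.eigenvalues i : ℂ)) *
      star (hA.eigenvectorUnitary : Matrix (Fin n) (Fin n) ℂ) := by
  set φ := Unitary.conjStarAlgAut ℂ _ hA.eigenvectorUnitary
  have hdiag : aeval (diagonal (RCLike.ofReal ∘ hA.eigenvalues)) p =
      diagonal (fun i ↦ p.eval (hA.eigenvalues i : ℂ)) := by
    refine (aeval_algHom_apply (diagonalAlgHom (n := Fin n) (α := ℂ) ℂ)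
      (fun i ↦ (hA.eigenvalues i : ℂ)) p).trans (congrArg diagonal (funext fun i ↦ ?_))
    simp
  calc aeval A p = aeval (φ (diagonal (RCLike.ofReal ∘ hA.eigenvalues))) p :=
        congrArg (aeval · p) hA.spectral_theorem
    _ = φ (aeval (diagonal (RCLike.ofReal ∘ hA.eigenvalues)) p) :=
        aeval_algHom_apply φ.toAlgEquiv.toAlgHom _ p
    _ = _ := by rw [hdiag, Unitary.conjStarAlgAut_apply]

lemma exists_aeval_eq_impow (hA : A.IsHermitian) (t : ℝ) :
    ∃ p : ℂ[X], aeval A p = hA.impow t ∧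
      ∀ i, p.eval (hA.eigenvalues i : ℂ) = imaginaryPow t (hA.eigenvalues i) := by
  set p := Lagrange.interpolate (Finset.univ.image hA.eigenvalues) ((↑) : ℝ → ℂ) (imaginaryPow t)
  have hp (i : Fin n) : p.eval (hA.eigenvalues i : ℂ) = imaginaryPow t (hA.eigenvalues i) :=
    Lagrange.eval_interpolate_at_node _ Complex.ofReal_injective.injOn (by simp)
  refine ⟨p, ?_, hp⟩
  simp only [aeval_eq_conj_diagonal_eval hA, hp]
  rfl

lemma impow_mem_adjoin_singleton (hA : A.IsHermitian) (t : ℝ) :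
    hA.impow t ∈ Algebra.adjoin ℂ {A} := by
  obtain ⟨p, hp, -⟩ := exists_aeval_eq_impow hA t
  exact hp ▸ aeval_mem_adjoin_singleton ℂ A

lemma impow_mem {S : Subalgebra ℂ (Matrix (Fin n) (Fin n) ℂ)} (hA : A.IsHermitian) (hAS : A ∈ S)
    (t : ℝ) : hA.impow t ∈ S :=
  Algebra.adjoin_le (Set.singleton_subset_iff.mpr hAS) (impow_mem_adjoin_singleton hA t)

lemma commute_impow (hA : A.IsHermitian) (hAB : Commute A B) (t : ℝ) : Commute (hA.impow t) B :=
  (Algebra.commute_of_mem_adjoin_singleton_of_commute (impow_mem_adjoin_singleton hA t)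
    hAB.symm).symm

lemma impow_mulVec (hA : A.IsHermitian) {v : Fin n → ℂ} {x : ℝ} (hv0 : v ≠ 0)
    (hv : A *ᵥ v = (x : ℂ) • v) (t : ℝ) : hA.impow t *ᵥ v = imaginaryPow t x • v := by
  obtain ⟨p, hpA, hp⟩ := exists_aeval_eq_impow hA t
  obtain ⟨i, hi⟩ := exists_eigenvalues_eq hA hv0 hv
  obtain rfl : hA.eigenvalues i = x := Complex.ofReal_injective hi
  rw [← hpA, aeval_mulVec_of_mulVec_eq_smul hv, hp]

lemma impow_mul (hA : A.IsHermitian) (hB : B.IsHermitian) (hAB : (A * B).IsHermitian) (t : ℝ) :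
    hAB.impow t = hA.impow t * hB.impow t := by
  have hcomm : Commute A B := (IsSelfAdjoint.commute_iff hA hB).mpr hAB
  refine eq_of_mulVec_eq_of_joint_eigenvectors hA hB hcomm ?_
  intro x y v hv0 (hAv : A *ᵥ v = (x : ℂ) • v) (hBv : B *ᵥ v = (y : ℂ) • v)
  have hABv : (A * B) *ᵥ v = ((x * y : ℝ) : ℂ) • v := by
    rw [← mulVec_mulVec, hBv, mulVec_smul, hAv, smul_smul, mul_comm, Complex.ofReal_mul]
  rw [impow_mulVec hAB hv0 hABv, ← mulVec_mulVec, impow_mulVec hB hv0 hBv, mulVec_smul,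
    impow_mulVec hA hv0 hAv, smul_smul, imaginaryPow_mul, mul_comm]

lemma impow_mul_impow_neg (hA : A.IsHermitian) (hunit : IsUnit A) (t : ℝ) :
    hA.impow t * hA.impow (-t) = 1 := by
  refine eq_of_mulVec_eq_of_joint_eigenvectors hA hA (.refl A) ?_
  intro x _ v hv0 (hv : A *ᵥ v = (x : ℂ) • v) _
  have hx : x ≠ 0 := by
    rintro rfl
    exact hv0 (mulVec_injective_of_isUnit hunit (by simpa using hv))
  rw [← mulVec_mulVec, impow_mulVec hA hv0 hv, mulVec_smul, impow_mulVec hA hv0 hv, smul_smul,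
    mul_comm, imaginaryPow_mul_imaginaryPow_neg t hx, one_smul, one_mulVec]

lemma impow_mul_mul_impow_neg_mul_right {L K R X : Matrix (Fin n) (Fin n) ℂ}
    (hL : L.IsHermitian) (hK : K.IsHermitian) (hR : R.IsHermitian) (hunit : IsUnit R)
    (hLR : (L * R).IsHermitian) (hKR : (K * R).IsHermitian) (hX : Commute R X) (t : ℝ) :
    hLR.impow t * X * hKR.impow (-t) = hL.impow t * X * hK.impow (-t) := by
  have hRX : Commute (hR.impow t) X := commute_impow hR hX t
  have hRK : Commute (hR.impow t) (hK.impow (-t)) :=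
    commute_impow hR (commute_impow hK ((IsSelfAdjoint.commute_iff hK hR).mpr hKR) (-t)).symm t
  calc hLR.impow t * X * hKR.impow (-t)
      = hL.impow t * (hR.impow t * X) * (hK.impow (-t) * hR.impow (-t)) := by
        rw [impow_mul hL hR, impow_mul hK hR, mul_assoc (hL.impow t)]
    _ = hL.impow t * X * (hR.impow t * hK.impow (-t)) * hR.impow (-t) := by
        rw [hRX.eq]; simp only [mul_assoc]
    _ = hL.impow t * X * hK.impow (-t) * (hR.impow t * hR.impow (-t)) := by
        rw [hRK.eq]; simp only [mul_assoc]
    _ = hL.impow t * X * hK.impow (-t) := by rw [impow_mul_impow_neg hR hunit, mul_one]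

lemma impow_mul_mul_impow_neg_mem {S : Subalgebra ℂ (Matrix (Fin n) (Fin n) ℂ)}
    {A K R X : Matrix (Fin n) (Fin n) ℂ} (hR : R.IsHermitian) (hunit : IsUnit R)
    (hS : ∀ x ∈ S, Commute R x) (hA : A ∈ S) (hK : K ∈ S) (hX : X ∈ S)
    (hAR : (A * R).IsHermitian) (hKR : (K * R).IsHermitian) (t : ℝ) :
    hAR.impow t * X * hKR.impow (-t) ∈ S := by
  have hAh : A.IsHermitian := isSelfAdjoint_of_mul_of_commute hAR hR hunit (hS A hA)
  have hKh : K.IsHermitian := isSelfAdjoint_of_mul_of_commute hKR hR hunit (hS K hK)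
  rw [impow_mul_mul_impow_neg_mul_right hAh hKh hR hunit hAR hKR (hS X hX)]
  exact mul_mem (mul_mem (impow_mem hAh hA t) hX) (impow_mem hKh hK (-t))

end Impow

lemma exists_mem_mul_eq_tsum_smul {n : ℕ} {κ : Type*}
    (S : Submodule ℂ (Matrix (Fin n) (Fin n) ℂ)) (R : Matrix (Fin n) (Fin n) ℂ)
    {L : κ → Matrix (Fin n) (Fin n) ℂ} (hL : ∀ k, L k ∈ S) (c : κ → ℝ) :
    ∃ K ∈ S, K * R = ∑' k, c k • (L k * R) := by
  have hmem : ∑' k, c k • (L k * R) ∈ S.map (LinearMap.mulRight ℂ R) :=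
    tsum_mem (Submodule.closed_of_finiteDimensional _) fun k ↦
      Submodule.smul_of_tower_mem _ (c k) (Submodule.mem_map_of_mem (hL k))
  exact hmem

theorem sufficiency_of_generated_subalgebra_general {n : ℕ} {Θ : Type*}
    (L : Θ → Matrix (Fin n) (Fin n) ℂ) (R K : Matrix (Fin n) (Fin n) ℂ)
    (hR : R.IsHermitian) (hunit : IsUnit R) (hcomm : ∀ θ, R * L θ = L θ * R)
    (hD : ∀ θ, (L θ * R).PosSemidef)
    (hK : K ∈ StarAlgebra.adjoin ℂ (Set.range L)) (hω : (K * R).PosSemidef) :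
    (∀ (θ : Θ) (t : ℝ), (hD θ).1.impow t * hω.1.impow (-t) ∈
        StarAlgebra.adjoin ℂ (Set.range L)) ∧
    (∀ (t : ℝ), ∀ x ∈ StarAlgebra.adjoin ℂ (Set.range L),
        hω.1.impow t * x * hω.1.impow (-t) ∈ StarAlgebra.adjoin ℂ (Set.range L)) := by
  set M := StarAlgebra.adjoin ℂ (Set.range L)
  have hRM (x) (hx : x ∈ M) : Commute R x :=
    commute_of_mem_starAlgebra_adjoin hR (Set.forall_mem_range.mpr hcomm) hx
  have hmem {A x : Matrix (Fin n) (Fin n) ℂ} (hA : A ∈ M) (hx : x ∈ M)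
      (hAR : (A * R).IsHermitian) (t : ℝ) : hAR.impow t * x * hω.1.impow (-t) ∈ M :=
    impow_mul_mul_impow_neg_mem (S := M.toSubalgebra) hR hunit hRM hA hK hx hAR hω.1 t
  refine ⟨fun θ t ↦ ?_, fun t x hx ↦ hmem hK hx hω.1 t⟩
  have hLM : L θ ∈ M := StarAlgebra.subset_adjoin ℂ _ ⟨θ, rfl⟩
  simpa only [mul_one] using hmem hLM (one_mem M) (hD θ).1 t

/-- **Sufficiency of the algebra generated by a commuting factorization.**
If `D_θ = L_θ R` with `L_θ, R` positive, `R` invertible and commuting with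
every `L_θ`, and `M_L` is the *-subalgebra generated by the `L_θ`, then for
any faithful convex combination `D_ω = Σ λ_n D_{θ_n}` (which is assumed
positive definite) all the cocycles `D_θ^{it} D_ω^{-it}` lie in `M_L`
(sufficiency), and `M_L` is invariant under the modular group of `ω`. -/
theorem sufficiency_of_generated_subalgebra {n : ℕ} {Θ : Type*}
    (D : Θ → Matrix (Fin n) (Fin n) ℂ)
    (hD : ∀ θ, (D θ).PosSemidef) (htr : ∀ θ, (D θ).trace = 1)
    (L : Θ → Matrix (Fin n) (Fin n) ℂ) (R : Matrix (Fin n) (Fin n) ℂ)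
    (hL : ∀ θ, (L θ).PosSemidef) (hR : R.PosDef)
    (hcomm : ∀ θ, R * L θ = L θ * R)
    (hfact : ∀ θ, D θ = L θ * R)
    (θseq : ℕ → Θ) (lam : ℕ → ℝ) (hlam : ∀ k, 0 < lam k)
    (hlamsum : (∑' k, lam k) = 1)
    (Dω : Matrix (Fin n) (Fin n) ℂ) (hDω : Dω = ∑' k, lam k • D (θseq k))
    (hω : Dω.PosDef) :
    (∀ (θ : Θ) (t : ℝ), (hD θ).1.impow t * hω.1.impow (-t) ∈
        StarAlgebra.adjoin ℂ (Set.range L)) ∧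
    (∀ (t : ℝ), ∀ x ∈ StarAlgebra.adjoin ℂ (Set.range L),
        hω.1.impow t * x * hω.1.impow (-t) ∈ StarAlgebra.adjoin ℂ (Set.range L)) := by
  obtain rfl : D = fun θ ↦ L θ * R := funext hfact
  obtain ⟨K, hK, rfl⟩ := hDω ▸ exists_mem_mul_eq_tsum_smul
    (StarAlgebra.adjoin ℂ (Set.range L)).toSubalgebra.toSubmodule R
    (fun k ↦ StarAlgebra.subset_adjoin ℂ _ ⟨θseq k, rfl⟩) lam
  exact sufficiency_of_generated_subalgebra_general L R K hR.1 hR.isUnit hcomm hD hK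
    hω.posSemidef
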